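/- arXiv:0707.0607 — 5 statements merged into one kernel-verified Lean document; each statement's English description precedes it below -/
import Mathlib

section
/- Let X and Y be the unique solutions in 𝟙 + λA[[λ]] of the equations X = 𝟙 + λa ≺ X and Y = 𝟙 − Y ≻ λa, for a fixed a ∈ A. Then there is a unique Ω′ = Ω′(λa) ∈ λA[[λ]] with X = exp*(Ω′), it also satisfies Y = exp*(−Ω′), and Ω′ obeys the recursive equations Ω′(λa) = Σ_{m≥0} ((−1)^m B_m/m!) R_◁[Ω′]^m(λa) and equivalently Ω′(λa) = Σ_{m≥0} (B_m/m!) L_▷[Ω′]^m(λa), where B_m are the Bernoulli numbers. (The recursion determines Ω′ uniquely, since the coefficient of λ^n on the right-hand side depends only on coefficients of Ω′ of order < n.) -/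
/-! Write `l = (w ≻ ·)` and `r = (· ≺ w)` for the operators attached to a series `w`. The dendriform
axioms say that `l` and `r` commute, that `w^{*(n+1)} = Σ_{i+j=n} l^i r^j w`, and that
`v ≺ w^{*n} = r^n v`. With `L = L_▷[w] = l - r` and `b = ((e^L - 1) / L) w` this gives
`b + b ≺ (exp*(w) - 𝟙) = e^r b = ((e^l - e^r) / (l - r)) w = exp*(w) - 𝟙`,
so `exp*(w)` solves `X = 𝟙 + b ≺ X` (`IsDend.expS_eq`). If `X = exp*(w)` also solves
`X = 𝟙 + λa ≺ X`, then `b = λa`, since `· ≺ X` is injective (`eq_of_eq_add_conv`), and inverting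
`(e^z - 1) / z` yields `w = (L / (e^L - 1)) (λa)`, which is the Bernoulli recursion
(`ev_bernoulli_ev`). The other recursion is the same one because `R_◁[w] = -L_▷[w]`.

The claim about `Y` follows by passing to the opposite dendriform algebra `u ≺' v = v ≻ u`,
`u ≻' v = v ≺ u` with `-w` in place of `w`: this leaves `L` and `exp*` unchanged, replaces
`b` by `-b`, and turns the equation for `X` into the one for `Y`.

All power series in operators converge because `l`, `r` and `L` raise the λ-adic order. This is
recorded by the predicate `Contracting`, which also gives existence and uniqueness of fixed points,
and hence of the logarithm `w` of `X`.
-/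

open Finset

namespace DendSeries

variable {k A : Type*} [Field k] [CharZero k] [AddCommGroup A] [Module k A]

/-- Elements of `λA[[λ]]`: `f n` is the coefficient of `λ^(n+1)`. -/
abbrev Ser (A : Type*) := ℕ → A

/-- Cauchy-product extension of a bilinear operation `b` on `A` to `λA[[λ]]`. -/
def conv (b : A →ₗ[k] A →ₗ[k] A) (f g : Ser A) : Ser A :=
  fun n => ∑ i ∈ Finset.range n, b (f i) (g (n - 1 - i))

/-- The associative product `f * g = f ≺ g + f ≻ g` on `λA[[λ]]`. -/
def mulS (pr su : A →ₗ[k] A →ₗ[k] A) (f g : Ser A) : Ser A :=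
  conv pr f g + conv su f g

/-- `powS pr su f m = f^{*(m+1)}`. -/
def powS (pr su : A →ₗ[k] A →ₗ[k] A) (f : Ser A) (m : ℕ) : Ser A :=
  (mulS pr su f)^[m] f

/-- The series part of `exp*(f) = 𝟙 + Σ_{n≥1} f^{*n}/n!` for `f ∈ λA[[λ]]`. -/
def expS (pr su : A →ₗ[k] A →ₗ[k] A) (f : Ser A) : Ser A :=
  fun n => ∑ m ∈ Finset.range (n + 1),
    ((Nat.factorial (m + 1) : k))⁻¹ • powS pr su f m n

/-- The element `λ a` of `λA[[λ]]`, for `a ∈ A`. -/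
def lam (a : A) : Ser A := fun n => if n = 0 then a else 0

/-- The operator `R_◁[w] : v ↦ v ◁ w = v ≺ w − w ≻ v` on `λA[[λ]]`. -/
def rlhdOp (pr su : A →ₗ[k] A →ₗ[k] A) (w : Ser A) (v : Ser A) : Ser A :=
  conv pr v w - conv su w v

/-- The operator `L_▷[w] : v ↦ w ▷ v = w ≻ v − v ≺ w` on `λA[[λ]]`. -/
def lrhdOp (pr su : A →ₗ[k] A →ₗ[k] A) (w : Ser A) (v : Ser A) : Ser A :=
  conv su w v - conv pr v w

set_option linter.unusedSectionVars false

/-! ### Finite sums and a noncommutative binomial identity -/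

/-- A square sum whose terms vanish beyond the antidiagonal may be summed along antidiagonals. -/
lemma sum_square_eq_sum_antidiagonal {M : Type*} [AddCommMonoid M] (N : ℕ) (G : ℕ → ℕ → M)
    (hG : ∀ i j, N ≤ i + j → G i j = 0) :
    ∑ i ∈ range N, ∑ j ∈ range N, G i j
      = ∑ s ∈ range N, ∑ p ∈ antidiagonal s, G p.1 p.2 := by
  have h1 : ∀ s, ∑ p ∈ antidiagonal s, G p.1 p.2 = ∑ i ∈ range (s + 1), G i (s - i) := fun s =>
    Finset.Nat.sum_antidiagonal_eq_sum_range_succ G s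
  simp_rw [h1]
  rw [sum_range_diag_flip]
  refine sum_congr rfl fun i _ => ?_
  symm
  refine sum_subset (fun j hj => ?_) fun j hj hj' => hG i j ?_
  · simp only [mem_range] at *; omega
  · simp only [mem_range] at *; omega

/-- For commuting `r` and `s`, this is the homogeneous form of
`e^r (e^s - 1) / s = (e^{s+r} - e^r) / s`. -/
lemma sum_choose_eq_sum_pow {E : Type*} [Ring E] (r s : E) (h : Commute r s) (n : ℕ) :
    ∑ p ∈ antidiagonal n, (n + 1).choose p.1 • (r ^ p.1 * s ^ p.2)
      = ∑ p ∈ antidiagonal n, (r + s) ^ p.1 * r ^ p.2 := by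
  induction n with
  | zero => simp
  | succ n ih =>
    have hb := h.add_pow' (n + 1)
    rw [Finset.Nat.sum_antidiagonal_succ] at hb ⊢
    rw [Finset.Nat.sum_antidiagonal_succ']
    have hr : ∑ p ∈ antidiagonal n, (r + s) ^ p.1 * r ^ (p.2 + 1)
        = r * ∑ p ∈ antidiagonal n, (r + s) ^ p.1 * r ^ p.2 := by
      rw [mul_sum]
      refine sum_congr rfl fun p _ => ?_
      have hc : Commute r ((r + s) ^ p.1) :=
        ((Commute.refl r).add_right h).pow_right _
      rw [pow_succ', ← mul_assoc, ← mul_assoc, hc.eq]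
    rw [hr, ← ih, hb, mul_sum]
    have hsum : ∑ p ∈ antidiagonal n, (n + 1 + 1).choose (p.1 + 1) • (r ^ (p.1 + 1) * s ^ p.2)
        = ∑ p ∈ antidiagonal n, r * ((n + 1).choose p.1 • (r ^ p.1 * s ^ p.2))
          + ∑ p ∈ antidiagonal n, (n + 1).choose (p.1 + 1) • (r ^ (p.1 + 1) * s ^ p.2) := by
      rw [← sum_add_distrib]
      refine sum_congr rfl fun p _ => ?_
      rw [Nat.choose_succ_succ, add_smul, mul_smul_comm, ← mul_assoc, ← pow_succ']
    simp only [hsum, Nat.choose_zero_right, pow_zero, mul_one]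
    abel

/-! ### The λ-adic filtration -/

/-- A map on series is contracting if the coefficient of index `n` of its value only depends on
the coefficients of index `< n` of its argument. -/
def Contracting (G : Ser A → Ser A) : Prop :=
  ∀ f g : Ser A, ∀ n, (∀ i < n, f i = g i) → G f n = G g n

lemma Contracting.unique {G : Ser A → Ser A} (hG : Contracting G) {f g : Ser A}
    (hf : f = G f) (hg : g = G g) : f = g := by
  funext n
  induction n using Nat.strong_induction_on with
  | _ n ih => rw [hf, hg]; exact hG f g n ih

lemma Contracting.existsUnique {G : Ser A → Ser A} (hG : Contracting G) :
    ∃! w, w = G w := by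
  have key : ∀ n d, G^[n + 1 + d] 0 n = G^[n + 1] 0 n := by
    intro n
    induction n using Nat.strong_induction_on with
    | _ n ih =>
      intro d
      rw [show n + 1 + d = (n + d) + 1 by omega, Function.iterate_succ_apply',
        Function.iterate_succ_apply']
      refine hG _ _ n fun i hi => ?_
      obtain ⟨e, rfl⟩ : ∃ e, n = i + 1 + e := ⟨n - (i + 1), by omega⟩
      rw [ih i hi e, show i + 1 + e + d = i + 1 + (e + d) by omega, ih i hi]
  refine ⟨fun n => G^[n + 1] 0 n, ?_, fun v hv => ?_⟩
  · funext n
    rw [Function.iterate_succ_apply']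
    refine hG _ _ n fun i hi => ?_
    obtain ⟨e, rfl⟩ : ∃ e, n = i + 1 + e := ⟨n - (i + 1), by omega⟩
    exact key i e
  · refine hG.unique hv ?_
    funext n
    rw [Function.iterate_succ_apply']
    refine hG _ _ n fun i hi => ?_
    obtain ⟨e, rfl⟩ : ∃ e, n = i + 1 + e := ⟨n - (i + 1), by omega⟩
    exact key i e

lemma conv_contracting_right (b : A →ₗ[k] A →ₗ[k] A) (f : Ser A) :
    Contracting (conv b f) := by
  intro u v n h
  refine sum_congr rfl fun i hi => ?_
  rw [h (n - 1 - i) (by have := mem_range.1 hi; omega)]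

lemma conv_contracting_left (b : A →ₗ[k] A →ₗ[k] A) (f : Ser A) :
    Contracting (fun v => conv b v f) := by
  intro u v n h
  refine sum_congr rfl fun i hi => ?_
  rw [h i (mem_range.1 hi)]

lemma pow_apply_of_contracting {T : Module.End k (Ser A)} (hT : Contracting T) (m : ℕ) :
    ∀ (u v : Ser A) (n : ℕ), (∀ i < n + 1 - m, u i = v i) → (T ^ m) u n = (T ^ m) v n := by
  induction m with
  | zero => intro u v n h; exact h n (by omega)
  | succ m ih =>
    intro u v n h
    rw [pow_succ', Module.End.mul_apply, Module.End.mul_apply]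
    exact hT _ _ n fun i hi => ih u v i fun j hj => h j (by omega)

/-- `T ^ i * S ^ j` raises the order by `i + j`. -/
lemma pow_pow_apply_eq_zero {T S : Module.End k (Ser A)} (hT : Contracting T)
    (hS : Contracting S) (i j : ℕ) (v : Ser A) (n : ℕ) (h : n < i + j) :
    (T ^ i) ((S ^ j) v) n = 0 := by
  have h2 : (T ^ i) ((S ^ j) v) n = (T ^ i) 0 n := by
    refine pow_apply_of_contracting hT i _ _ n fun a ha => ?_
    have := pow_apply_of_contracting hS j v 0 a fun b hb => by omega
    simpa using this
  simpa using h2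

lemma pow_apply_eq_zero {T : Module.End k (Ser A)} (hT : Contracting T)
    (i : ℕ) (v : Ser A) (n : ℕ) (h : n < i) : (T ^ i) v n = 0 := by
  simpa using pow_pow_apply_eq_zero hT hT i 0 v n (by omega)

/-- The value at `v` of the power series `Σ_m c m T^m` in a contracting operator `T`. Truncating
at `m = n` in degree `n` is harmless because `T ^ m` raises the order by `m`. -/
def ev (T : Module.End k (Ser A)) (c : ℕ → k) (v : Ser A) : Ser A :=
  fun n => ∑ m ∈ range (n + 1), c m • (T ^ m) v n

lemma ev_apply_of_lt {T : Module.End k (Ser A)} (hT : Contracting T) (c : ℕ → k) (v : Ser A)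
    {n N : ℕ} (h : n < N) : ev T c v n = ∑ m ∈ range N, c m • (T ^ m) v n := by
  refine sum_subset (fun j hj => ?_) fun j hj hj' => ?_
  · simp only [mem_range] at *; omega
  · rw [pow_apply_eq_zero hT j v n (by simp only [mem_range] at *; omega), smul_zero]

lemma ev_ev_apply {T S : Module.End k (Ser A)} (hT : Contracting T) (hS : Contracting S)
    (c d : ℕ → k) (v : Ser A) (n : ℕ) :
    ev T c (ev S d v) n = ∑ s ∈ range (n + 1), ∑ p ∈ antidiagonal s,
      (c p.1 * d p.2) • (T ^ p.1) ((S ^ p.2) v) n := by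
  rw [← sum_square_eq_sum_antidiagonal (n + 1)
    (fun i j => (c i * d j) • (T ^ i) ((S ^ j) v) n) ?_]
  · refine sum_congr rfl fun i _ => ?_
    have h : (T ^ i) (ev S d v) n
        = (T ^ i) (∑ j ∈ range (n + 1), d j • (S ^ j) v) n := by
      refine pow_apply_of_contracting hT i _ _ n fun a ha => ?_
      rw [ev_apply_of_lt hS d v (show a < n + 1 by omega)]
      simp
    rw [h]
    simp [map_sum, smul_sum, smul_smul]
  · intro i j hij
    rw [pow_pow_apply_eq_zero hT hS i j v n (by omega), smul_zero]

/-- `z / (e^z - 1)` is inverse to `(e^z - 1) / z`, evaluated at a contracting operator. -/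
lemma ev_bernoulli_ev {T : Module.End k (Ser A)} (hT : Contracting T) (w : Ser A) :
    ev T (fun m => ((bernoulli m / Nat.factorial m : ℚ) : k))
      (ev T (fun m => ((Nat.factorial (m + 1) : k))⁻¹) w) = w := by
  funext n
  rw [ev_ev_apply hT hT]
  have h : ∀ s, ∑ p ∈ antidiagonal s, (((bernoulli p.1 / Nat.factorial p.1 : ℚ) : k)
      * ((Nat.factorial (p.2 + 1) : k))⁻¹) • (T ^ p.1) ((T ^ p.2) w) n
      = if s = 0 then w n else 0 := by
    intro s
    have h1 : ∑ p ∈ antidiagonal s, (bernoulli p.1 / Nat.factorial p.1 : ℚ)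
        * ((Nat.factorial (p.2 + 1) : ℚ))⁻¹ = if s = 0 then 1 else 0 := by
      have h2 := congrArg (fun q : ℚ => (Nat.factorial s : ℚ)⁻¹ * q) (bernoulli_spec' s)
      simp only [mul_sum] at h2
      rw [show (if s = 0 then (1 : ℚ) else 0) = (Nat.factorial s : ℚ)⁻¹ * if s = 0 then 1 else 0
        by split_ifs with hs <;> simp [hs], ← h2]
      refine sum_congr rfl fun p hp => ?_
      replace hp := HasAntidiagonal.mem_antidiagonal.1 hp
      subst hp
      have e : (Nat.factorial (p.1 + p.2) : ℚ)
          = (p.1 + p.2).choose p.2 * Nat.factorial p.1 * Nat.factorial p.2 := by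
        exact_mod_cast (Nat.add_choose_mul_factorial_mul_factorial p.1 p.2).symm
      have c0 : ((p.1 + p.2).choose p.2 : ℚ) ≠ 0 := by
        exact_mod_cast (Nat.choose_pos (by omega)).ne'
      have f1 : (Nat.factorial p.1 : ℚ) ≠ 0 := by exact_mod_cast Nat.factorial_ne_zero _
      have f2 : (Nat.factorial p.2 : ℚ) ≠ 0 := by exact_mod_cast Nat.factorial_ne_zero _
      have f3 : ((p.2 : ℚ) + 1) ≠ 0 := by positivity
      rw [e, Nat.factorial_succ]
      push_cast
      field_simp
    have h3 : ∑ p ∈ antidiagonal s, (((bernoulli p.1 / Nat.factorial p.1 : ℚ) : k)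
        * ((Nat.factorial (p.2 + 1) : k))⁻¹) = if s = 0 then 1 else 0 := by
      have := congrArg (fun q : ℚ => (q : k)) h1
      simp only [Rat.cast_sum] at this
      rw [show (if s = 0 then (1 : k) else 0) = ((if s = 0 then (1 : ℚ) else 0 : ℚ) : k) by
        split_ifs <;> simp, ← this]
      refine sum_congr rfl fun p _ => ?_
      push_cast
      rfl
    have h4 : ∀ p ∈ antidiagonal s, (((bernoulli p.1 / Nat.factorial p.1 : ℚ) : k)
        * ((Nat.factorial (p.2 + 1) : k))⁻¹) • (T ^ p.1) ((T ^ p.2) w) n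
        = (((bernoulli p.1 / Nat.factorial p.1 : ℚ) : k)
        * ((Nat.factorial (p.2 + 1) : k))⁻¹) • (T ^ s) w n := by
      intro p hp
      rw [← HasAntidiagonal.mem_antidiagonal.1 hp, pow_add, Module.End.mul_apply]
    rw [sum_congr rfl h4, ← sum_smul, h3]
    split_ifs with hs <;> simp [hs]
  rw [sum_congr rfl fun s _ => h s]
  simp

/-! ### Dendriform identities for series -/

/-- Left multiplication `v ↦ b(w, v)` on series. -/
def lop (b : A →ₗ[k] A →ₗ[k] A) (w : Ser A) : Module.End k (Ser A) where
  toFun v := conv b w v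
  map_add' u v := by funext n; simp [conv, sum_add_distrib]
  map_smul' c v := by funext n; simp [conv, smul_sum]

/-- Right multiplication `v ↦ b(v, w)` on series. -/
def rop (b : A →ₗ[k] A →ₗ[k] A) (w : Ser A) : Module.End k (Ser A) where
  toFun v := conv b v w
  map_add' u v := by funext n; simp [conv, sum_add_distrib]
  map_smul' c v := by funext n; simp [conv, smul_sum]

lemma conv_flip (b : A →ₗ[k] A →ₗ[k] A) (f g : Ser A) : conv b.flip f g = conv b g f := by
  funext n
  simp only [conv, LinearMap.flip_apply]
  rw [← sum_range_reflect]
  refine sum_congr rfl fun i hi => ?_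
  rw [show n - 1 - (n - 1 - i) = i by have := mem_range.1 hi; omega]

lemma conv_add_form (b c : A →ₗ[k] A →ₗ[k] A) (f g : Ser A) :
    conv (b + c) f g = conv b f g + conv c f g := by
  funext n; simp [conv, sum_add_distrib]

/-- An associativity-type law for bilinear maps on `A` extends to series. -/
lemma conv_conv (b c b' c' : A →ₗ[k] A →ₗ[k] A)
    (hb : ∀ x y z, b (c x y) z = b' x (c' y z)) (f g h : Ser A) :
    conv b (conv c f g) h = conv b' f (conv c' g h) := by
  funext n
  cases n with
  | zero => simp [conv]
  | succ n =>
    have hl : conv b (conv c f g) h (n + 1) = ∑ i ∈ range n, ∑ j ∈ range (i + 1),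
        b' (f j) (c' (g (i - j)) (h (n - 1 - j - (i - j)))) := by
      simp only [conv, map_sum, LinearMap.sum_apply, hb]
      rw [sum_range_succ']
      simp only [range_zero, sum_empty, add_zero]
      refine sum_congr rfl fun i hi => sum_congr rfl fun j hj => ?_
      simp only [mem_range] at hi hj
      rw [show i + 1 - 1 - j = i - j by omega,
        show n + 1 - 1 - (i + 1) = n - 1 - j - (i - j) by omega]
    rw [hl, sum_range_diag_flip n
      fun j t => b' (f j) (c' (g t) (h (n - 1 - j - t)))]
    simp only [conv, map_sum]
    rw [sum_range_succ]
    simp only [Nat.add_sub_cancel, Nat.sub_self, range_zero, sum_empty, add_zero]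
    refine sum_congr rfl fun j hj => sum_congr rfl fun t ht => ?_
    rw [show n - j - 1 - t = n - 1 - j - t by omega]

/-- The dendriform axioms. -/
structure IsDend (pr su : A →ₗ[k] A →ₗ[k] A) : Prop where
  ax1 : ∀ a b c : A, pr (pr a b) c = pr a (pr b c + su b c)
  ax2 : ∀ a b c : A, pr (su a b) c = su a (pr b c)
  ax3 : ∀ a b c : A, su a (su b c) = su (pr a b + su a b) c

/-- The opposite dendriform algebra: `a ≺' b = b ≻ a` and `a ≻' b = b ≺ a`. -/
lemma IsDend.op {pr su : A →ₗ[k] A →ₗ[k] A} (h : IsDend pr su) : IsDend su.flip pr.flip where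
  ax1 a b c := by simp [h.ax3, add_comm]
  ax2 a b c := by simp [h.ax2]
  ax3 a b c := by simp [h.ax1, add_comm]

variable {pr su : A →ₗ[k] A →ₗ[k] A}

lemma IsDend.commute (h : IsDend pr su) (w : Ser A) : Commute (rop pr w) (lop su w) := by
  refine LinearMap.ext fun v => ?_
  exact conv_conv pr su su pr h.ax2 w v w

lemma IsDend.conv_powS (h : IsDend pr su) (w : Ser A) (m : ℕ) (v : Ser A) :
    conv pr v (powS pr su w m) = (rop pr w ^ (m + 1)) v := by
  induction m generalizing v with
  | zero => simp [powS, rop]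
  | succ m ih =>
    have e : powS pr su w (m + 1) = conv (pr + su) w (powS pr su w m) := by
      rw [conv_add_form]
      exact Function.iterate_succ_apply' _ _ _
    rw [e, ← conv_conv pr pr pr (pr + su) h.ax1, ih, pow_succ _ (m + 1)]
    rfl

/-- `w^{*(n+1)} = Σ_{i+j=n} (w ≻ ·)^i (· ≺ w)^j w`. -/
lemma IsDend.powS_eq (h : IsDend pr su) (w : Ser A) (n : ℕ) :
    powS pr su w n = ∑ p ∈ antidiagonal n, (lop su w ^ p.1) ((rop pr w ^ p.2) w) := by
  induction n with
  | zero => simp [powS]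
  | succ n ih =>
    have e : powS pr su w (n + 1) = conv pr w (powS pr su w n) + conv su w (powS pr su w n) :=
      Function.iterate_succ_apply' _ _ _
    rw [e, h.conv_powS, Finset.Nat.sum_antidiagonal_succ]
    congr 1
    change lop su w (powS pr su w n) = _
    rw [ih, map_sum]
    refine sum_congr rfl fun p _ => ?_
    rw [pow_succ', Module.End.mul_apply]

lemma rop_contracting (b : A →ₗ[k] A →ₗ[k] A) (w : Ser A) : Contracting (rop b w) :=
  conv_contracting_left b w

lemma lop_contracting (b : A →ₗ[k] A →ₗ[k] A) (w : Ser A) : Contracting (lop b w) :=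
  conv_contracting_right b w

/-- The operator `L_▷[w]` as a linear map. -/
def lrhd (pr su : A →ₗ[k] A →ₗ[k] A) (w : Ser A) : Module.End k (Ser A) :=
  lop su w - rop pr w

lemma lrhd_contracting (pr su : A →ₗ[k] A →ₗ[k] A) (w : Ser A) :
    Contracting (lrhd pr su w) := by
  intro u v n h
  change lop su w u n - rop pr w u n = lop su w v n - rop pr w v n
  rw [lop_contracting su w u v n h, rop_contracting pr w u v n h]

lemma IsDend.powS_apply_eq_zero (h : IsDend pr su) (w : Ser A) {m n : ℕ} (hm : n < m) :
    powS pr su w m n = 0 := by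
  rw [h.powS_eq, Finset.sum_apply]
  refine sum_eq_zero fun p hp => ?_
  have := HasAntidiagonal.mem_antidiagonal.1 hp
  exact pow_pow_apply_eq_zero (lop_contracting su w) (rop_contracting pr w) _ _ _ _ (by omega)

lemma IsDend.expS_apply_of_lt (h : IsDend pr su) (w : Ser A) {n N : ℕ} (hN : n < N) :
    expS pr su w n = ∑ m ∈ range N, ((Nat.factorial (m + 1) : k))⁻¹ • powS pr su w m n := by
  refine sum_subset (fun j hj => ?_) fun j hj hj' => ?_
  · simp only [mem_range] at *; omega
  · rw [h.powS_apply_eq_zero w (by simp only [mem_range] at *; omega), smul_zero]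

/-- The series `((e^L - 1) / L) w` for `L = L_▷[w]`; it is the generator `b` with
`exp*(w) = 𝟙 + b ≺ exp*(w)`. -/
def gen (pr su : A →ₗ[k] A →ₗ[k] A) (w : Ser A) : Ser A :=
  ev (lrhd pr su w) (fun m => ((Nat.factorial (m + 1) : k))⁻¹) w

/-- `b ≺ exp*(w) = e^{R} b` with `R = · ≺ w`. -/
lemma IsDend.add_conv_expS (h : IsDend pr su) (w b : Ser A) :
    b + conv pr b (expS pr su w) = ev (rop pr w) (fun m => ((Nat.factorial m : k))⁻¹) b := by
  funext n
  have h1 : conv pr b (expS pr su w) n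
      = ∑ m ∈ range (n + 1), ((Nat.factorial (m + 1) : k))⁻¹ • (rop pr w ^ (m + 1)) b n := by
    have h2 : conv pr b (expS pr su w) n = conv pr b
        (∑ m ∈ range (n + 1), ((Nat.factorial (m + 1) : k))⁻¹ • powS pr su w m) n := by
      refine conv_contracting_right pr b _ _ n fun i hi => ?_
      rw [h.expS_apply_of_lt w (show i < n + 1 by omega)]
      simp
    rw [h2]
    change lop pr b _ n = _
    rw [map_sum, Finset.sum_apply]
    refine sum_congr rfl fun m _ => ?_
    rw [map_smul, ← h.conv_powS]
    rfl
  rw [Pi.add_apply, h1, ev_apply_of_lt (rop_contracting pr w) _ _ (show n < n + 1 + 1 by omega),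
    sum_range_succ' _ (n + 1)]
  simp [add_comm]

/-- `exp*(w)` solves `X = 𝟙 + b ≺ X` with `b = gen w`, because
`e^R (e^{L-R} - 1) / (L - R) = (e^L - e^R) / (L - R)` for the commuting operators
`L = w ≻ ·` and `R = · ≺ w`. -/
lemma IsDend.expS_eq (h : IsDend pr su) (w : Ser A) :
    expS pr su w = gen pr su w + conv pr (gen pr su w) (expS pr su w) := by
  rw [h.add_conv_expS]
  funext n
  rw [gen, ev_ev_apply (rop_contracting pr w) (lrhd_contracting pr su w), expS]
  refine sum_congr rfl fun s _ => ?_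
  have hc : Commute (rop pr w) (lrhd pr su w) := (h.commute w).sub_right (Commute.refl _)
  have key := sum_choose_eq_sum_pow (rop pr w) (lrhd pr su w) hc s
  rw [show rop pr w + lrhd pr su w = lop su w by simp [lrhd]] at key
  have key2 := congrFun (LinearMap.congr_fun key w) n
  rw [h.powS_eq]
  simp only [LinearMap.sum_apply, Module.End.mul_apply] at key2
  rw [← key2, Finset.sum_apply, smul_sum]
  refine sum_congr rfl fun p hp => ?_
  have hp' := HasAntidiagonal.mem_antidiagonal.1 hp
  have hcoef : ((Nat.factorial (s + 1) : k))⁻¹ * ((s + 1).choose p.1 : k)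
      = (Nat.factorial p.1 : k)⁻¹ * (Nat.factorial (p.2 + 1) : k)⁻¹ := by
    have e : (Nat.factorial (s + 1) : k)
        = (s + 1).choose p.1 * Nat.factorial p.1 * Nat.factorial (p.2 + 1) := by
      have := Nat.choose_mul_factorial_mul_factorial (show p.1 ≤ s + 1 by omega)
      rw [show s + 1 - p.1 = p.2 + 1 by omega] at this
      exact_mod_cast this.symm
    have c0 : ((s + 1).choose p.1 : k) ≠ 0 := by
      exact_mod_cast (Nat.choose_pos (by omega)).ne'
    have f1 : (Nat.factorial p.1 : k) ≠ 0 := by exact_mod_cast Nat.factorial_ne_zero _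
    have f2 : (Nat.factorial (p.2 + 1) : k) ≠ 0 := by exact_mod_cast Nat.factorial_ne_zero _
    rw [e]
    field_simp
  rw [← hcoef, mul_smul, Nat.cast_smul_eq_nsmul]
  rfl

/-! ### The opposite algebra, and existence of the logarithm -/

lemma lop_flip (b : A →ₗ[k] A →ₗ[k] A) (w : Ser A) : lop b.flip w = rop b w :=
  LinearMap.ext fun v => conv_flip b w v

lemma rop_flip (b : A →ₗ[k] A →ₗ[k] A) (w : Ser A) : rop b.flip w = lop b w :=
  LinearMap.ext fun v => conv_flip b v w

lemma IsDend.expS_op (h : IsDend pr su) (w : Ser A) :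
    expS su.flip pr.flip w = expS pr su w := by
  have hp : ∀ m, powS su.flip pr.flip w m = powS pr su w m := by
    intro m
    rw [h.op.powS_eq, h.powS_eq, ← Finset.Nat.sum_antidiagonal_swap]
    refine sum_congr rfl fun p _ => ?_
    rw [lop_flip, rop_flip]
    exact LinearMap.congr_fun ((h.commute w).pow_pow p.2 p.1).eq w
  funext n
  simp only [expS, hp]

lemma gen_op_neg (pr su : A →ₗ[k] A →ₗ[k] A) (w : Ser A) :
    gen su.flip pr.flip (-w) = -gen pr su w := by
  have hL : lrhd su.flip pr.flip (-w) = lrhd pr su w := by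
    refine LinearMap.ext fun v => funext fun n => ?_
    rw [lrhd, lrhd, lop_flip, rop_flip]
    simp [lop, rop, conv, sum_neg_distrib]
    abel
  funext n
  rw [gen, gen, hL]
  simp [ev, sum_neg_distrib]

/-- The powers `w^{*(m+2)}` are contracting in `w`, so `exp*(w)` and `w` differ by a contracting
function of `w`. -/
lemma powS_succ_congr (pr su : A →ₗ[k] A →ₗ[k] A) (f g : Ser A) (m : ℕ) :
    ∀ n, (∀ i < n, f i = g i) → powS pr su f (m + 1) n = powS pr su g (m + 1) n := by
  have e : ∀ (w : Ser A) (m : ℕ), powS pr su w (m + 1) = mulS pr su w (powS pr su w m) :=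
    fun w m => Function.iterate_succ_apply' _ _ _
  have step : ∀ (u v : Ser A) (n : ℕ), (∀ i < n, f i = g i) → (∀ i < n, u i = v i) →
      mulS pr su f u n = mulS pr su g v n := by
    intro u v n h1 h2
    simp only [mulS, Pi.add_apply]
    rw [conv_contracting_right pr f u v n h2, conv_contracting_right su f u v n h2]
    have a1 := conv_contracting_left pr v f g n h1
    have a2 := conv_contracting_left su v f g n h1
    simp only at a1 a2
    rw [a1, a2]
  induction m with
  | zero => intro n h; rw [e, e]; exact step _ _ n h h
  | succ m ih =>
    intro n h
    rw [e f (m + 1), e g (m + 1)]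
    exact step _ _ n h fun i hi => ih i fun j hj => h j (by omega)

lemma existsUnique_log (pr su : A →ₗ[k] A →ₗ[k] A) (x : Ser A) :
    ∃! w : Ser A, x = expS pr su w := by
  let G : Ser A → Ser A := fun w n => x n -
    ∑ m ∈ range n, ((Nat.factorial (m + 1 + 1) : k))⁻¹ • powS pr su w (m + 1) n
  have hG : Contracting G := by
    intro f g n h
    change x n - _ = x n - _
    congr 1
    refine sum_congr rfl fun m _ => ?_
    rw [powS_succ_congr pr su f g m n h]
  have hiff : ∀ w : Ser A, x = expS pr su w ↔ w = G w := by
    intro w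
    rw [funext_iff, funext_iff]
    refine forall_congr' fun n => ?_
    have : expS pr su w n
        = ∑ m ∈ range n, ((Nat.factorial (m + 1 + 1) : k))⁻¹ • powS pr su w (m + 1) n + w n := by
      rw [expS, sum_range_succ']
      simp [powS]
    rw [this]
    change _ ↔ w n = x n - _
    rw [eq_sub_iff_add_eq, add_comm, eq_comm]
  simp only [hiff]
  exact hG.existsUnique

lemma eq_of_eq_add_conv {b c x : Ser A} (hb : x = b + conv pr b x) (hc : x = c + conv pr c x) :
    b = c := by
  have hG : Contracting (fun v : Ser A => x - conv pr v x) := by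
    intro f g n h
    have := conv_contracting_left pr x f g n h
    simp only at this
    simp [this]
  exact hG.unique (eq_sub_of_add_eq hb.symm) (eq_sub_of_add_eq hc.symm)

lemma eq_of_solves {c u v : Ser A} (hu : u = c + conv pr c u) (hv : v = c + conv pr c v) :
    u = v := by
  have hG : Contracting (fun v : Ser A => c + conv pr c v) := by
    intro f g n h
    simp [conv_contracting_right pr c f g n h]
  exact hG.unique hu hv

/-- **Pre-Lie Magnus expansion.**  Let `(A, ≺, ≻)` be a dendriform algebra over a
field of characteristic zero and `a ∈ A`.  Let `X = 𝟙 + x` and `Y = 𝟙 + y` be the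
solutions in `𝟙 + λA[[λ]]` of `X = 𝟙 + λa ≺ X` and `Y = 𝟙 − Y ≻ λa`.  Then there
is a unique `Ω' ∈ λA[[λ]]` with `X = exp*(Ω')`; moreover it satisfies
`Y = exp*(−Ω')` and obeys the recursions
`Ω' = Σ_{m≥0} ((−1)^m B_m/m!) R_◁[Ω']^m (λa) = Σ_{m≥0} (B_m/m!) L_▷[Ω']^m (λa)`. -/
theorem preLie_magnus {k A : Type*} [Field k] [CharZero k]
    [AddCommGroup A] [Module k A]
    (pr su : A →ₗ[k] A →ₗ[k] A)
    (ax1 : ∀ a b c : A, pr (pr a b) c = pr a (pr b c + su b c))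
    (ax2 : ∀ a b c : A, pr (su a b) c = su a (pr b c))
    (ax3 : ∀ a b c : A, su a (su b c) = su (pr a b + su a b) c)
    (a : A) (x y : Ser A)
    (hx : x = lam a + conv pr (lam a) x)
    (hy : y = -lam a - conv su y (lam a)) :
    (∃! w : Ser A, x = expS pr su w) ∧
    (∀ w : Ser A, x = expS pr su w →
      (y = expS pr su (-w) ∧
       (∀ n : ℕ, w n = ∑ m ∈ Finset.range (n + 1),
          (((-1 : ℚ) ^ m * bernoulli m / Nat.factorial m : ℚ) : k) •
            ((rlhdOp pr su w)^[m] (lam a)) n) ∧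
       (∀ n : ℕ, w n = ∑ m ∈ Finset.range (n + 1),
          ((bernoulli m / Nat.factorial m : ℚ) : k) •
            ((lrhdOp pr su w)^[m] (lam a)) n))) := by
  have hD : IsDend pr su := ⟨ax1, ax2, ax3⟩
  refine ⟨existsUnique_log pr su x, fun w hw => ?_⟩
  have hgen : gen pr su w = lam a := by
    refine eq_of_eq_add_conv (pr := pr) (x := x) ?_ hx
    rw [hw]
    exact hD.expS_eq w
  have hrec := ev_bernoulli_ev (lrhd_contracting pr su w) w
  rw [show ev (lrhd pr su w) (fun m => ((Nat.factorial (m + 1) : k))⁻¹) w = lam a from hgen] at hrec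
  have hL : ∀ m, (lrhdOp pr su w)^[m] (lam a) = (lrhd pr su w ^ m) (lam a) := by
    intro m
    rw [Module.End.pow_apply]
    rfl
  have hR : ∀ m, (rlhdOp pr su w)^[m] (lam a) = (-1 : k) ^ m • (lrhd pr su w ^ m) (lam a) := by
    intro m
    have e : rlhdOp pr su w = ⇑((-1 : k) • lrhd pr su w) := by
      funext v
      simp [rlhdOp, lrhd, lop, rop]
    rw [e, ← Module.End.pow_apply, smul_pow]
    rfl
  refine ⟨?_, fun n => ?_, fun n => ?_⟩
  · -- `y` and `exp*(-w)` both solve the equation for `X` in the opposite algebra, at `-λa`.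
    have h1 := hD.op.expS_eq (-w)
    rw [gen_op_neg, hgen, hD.expS_op] at h1
    refine eq_of_solves (pr := su.flip) (c := -lam a) ?_ h1
    have e : conv su.flip (-lam a) y = -conv su y (lam a) := by
      rw [conv_flip]
      exact (lop su y).map_neg (lam a)
    rw [e, ← sub_eq_add_neg]
    exact hy
  · rw [← congrFun hrec n]
    refine sum_congr rfl fun m _ => ?_
    rw [hR, Pi.smul_apply, smul_smul]
    congr 1
    push_cast
    have : ((-1 : k) ^ m) * (-1) ^ m = 1 := by rw [← mul_pow]; simp
    linear_combination (-(((bernoulli m : ℚ) : k) / (Nat.factorial m : k))) * this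
  · rw [← congrFun hrec n]
    refine sum_congr rfl fun m _ => ?_
    rw [hL]


end DendSeries
end

section
/- Define U′_0 := λa and, recursively, U′_{n+1} := Σ_{l≥1} ((−1)^l l/(l+1)!) L_▷[U′_n]^l(U′_n) for n ≥ 0 (each U′_n lies in λA[[λ]] and has λ-adic order at least 2^n, so the infinite products below converge λ-adically). Then the solutions X and Y in 𝟙 + λA[[λ]] of X = 𝟙 + λa ≺ X and Y = 𝟙 − Y ≻ λa are given by the ordered infinite products X = exp*(U′_0) * exp*(U′_1) * exp*(U′_2) * ⋯ and Y = ⋯ * exp*(−U′_2) * exp*(−U′_1) * exp*(−U′_0). -/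
/-!
Write `X = 𝟙 + x`. The heart of the matter is one factorisation step: if `z' = u' + u' ≺ z'`
where `u' = Σ_l ((−1)^l l/(l+1)!) L_▷[u]^l u`, then `exp*(u) * (𝟙 + z')` solves `Z = 𝟙 + u ≺ Z`
(`fer_step`). Using the dendriform axioms this reduces to the identity
`(exp*(u) − 𝟙) + exp*(u) ≻ u' = u ≺ exp*(u)` (`exp_key`). Let `ℓ v = u ≻ v` and `r v = v ≺ u`.
These operators commute, `exp*(u) ≻ v = e^ℓ v`, `v ≺ exp*(u) = e^r v`, `L_▷[u] = ℓ − r`, and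
`u^{*(n+1)} = Σ_{i+j=n} ℓ^i r^j u`; so the identity is
`(e^ℓ − e^r)/(ℓ − r) + e^ℓ ψ(ℓ − r) = e^r` with `ψ(z) = e^{−z} − (1 − e^{−z})/z`, and it is checked
in each degree by the binomial theorem (`quot_diff`, `fer_degree`).

Iterating the step from `u = λa` gives `X = exp*(U'_0) * ⋯ * exp*(U'_{N-1}) * (𝟙 + z)` with
`z = U'_N + U'_N ≺ z`, and `z` has order at least `2^N` because `U'_N` does.

The statement on `Y` is the statement on `X` in the opposite dendriform algebra
`a ≺' b = b ≻ a`, `a ≻' b = b ≺ a`, applied to `−a`: the recursion then produces `−U'_n`, and the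
order of the factors is reversed.
-/

open Finset

namespace DendSeries

variable {k A : Type*} [Field k] [CharZero k] [AddCommGroup A] [Module k A]

/-- The pre-Lie Fer recursion: `U' 0 = λ a` and
`U' (n+1) = Σ_{l≥1} ((−1)^l l/(l+1)!) L_▷[U' n]^l (U' n)`
(each `U' n` has `λ`-adic order at least `2^n`, so coefficientwise the sum is
finite). -/
def ferU (pr su : A →ₗ[k] A →ₗ[k] A) (a : A) : ℕ → Ser A
  | 0 => lam a
  | n + 1 => fun m => ∑ l ∈ Finset.Icc 1 (m + 1),
      (((-1 : ℚ) ^ l * l / Nat.factorial (l + 1) : ℚ) : k) •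
        ((lrhdOp pr su (ferU pr su a n))^[l] (ferU pr su a n)) m

/-- Series part of the partial product `exp*(U'_0) * exp*(U'_1) * ⋯ * exp*(U'_{N-1})`. -/
def ferProdX (pr su : A →ₗ[k] A →ₗ[k] A) (a : A) : ℕ → Ser A
  | 0 => 0
  | N + 1 =>
      ferProdX pr su a N + expS pr su (ferU pr su a N)
        + mulS pr su (ferProdX pr su a N) (expS pr su (ferU pr su a N))

/-- Series part of the partial product `exp*(−U'_{N-1}) * ⋯ * exp*(−U'_1) * exp*(−U'_0)`. -/
def ferProdY (pr su : A →ₗ[k] A →ₗ[k] A) (a : A) : ℕ → Ser A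
  | 0 => 0
  | N + 1 =>
      expS pr su (-(ferU pr su a N)) + ferProdY pr su a N
        + mulS pr su (expS pr su (-(ferU pr su a N))) (ferProdY pr su a N)


set_option linter.unusedSectionVars false

/-! ### Bilinearity and associativity of the Cauchy product -/

/-- `conv b` as a bilinear map on `λA[[λ]]`. -/
def convL (b : A →ₗ[k] A →ₗ[k] A) : Ser A →ₗ[k] Ser A →ₗ[k] Ser A :=
  LinearMap.mk₂ k (conv b)
    (fun f g h => by ext n; simp [conv, Finset.sum_add_distrib])
    (fun c f g => by ext n; simp [conv, Finset.smul_sum])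
    (fun f g h => by ext n; simp [conv, Finset.sum_add_distrib])
    (fun c f g => by ext n; simp [conv, Finset.smul_sum])

lemma convL_apply (b : A →ₗ[k] A →ₗ[k] A) (f g : Ser A) : convL b f g = conv b f g := rfl

lemma mulS_eq (pr su : A →ₗ[k] A →ₗ[k] A) (f g : Ser A) :
    mulS pr su f g = conv (pr + su) f g := by
  ext n; simp [mulS, conv, Finset.sum_add_distrib]

/-- Any identity `(x ∘₂ y) ∘₁ z = x ∘₃ (y ∘₄ z)` between bilinear operations passes to
Cauchy products; every dendriform axiom is of this shape, with `∘₂` or `∘₄` possibly `≺ + ≻`. -/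
lemma conv_assoc (b₁ b₂ b₃ b₄ : A →ₗ[k] A →ₗ[k] A)
    (h : ∀ x y z, b₁ (b₂ x y) z = b₃ x (b₄ y z)) (f g e : Ser A) :
    conv b₁ (conv b₂ f g) e = conv b₃ f (conv b₄ g e) := by
  ext n
  simp only [conv, map_sum, LinearMap.sum_apply, h]
  rw [Finset.sum_sigma', Finset.sum_sigma']
  refine Finset.sum_nbij' (fun p => ⟨p.2, p.1 - 1 - p.2⟩)
    (fun p => ⟨p.1 + p.2 + 1, p.1⟩) ?_ ?_ ?_ ?_ ?_
  · rintro ⟨i, j⟩ hij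
    simp only [Finset.mem_sigma, Finset.mem_range] at hij ⊢
    omega
  · rintro ⟨i, j⟩ hij
    simp only [Finset.mem_sigma, Finset.mem_range] at hij ⊢
    omega
  · rintro ⟨i, j⟩ hij
    simp only [Finset.mem_sigma, Finset.mem_range] at hij
    have : j + (i - 1 - j) + 1 = i := by omega
    simp [this]
  · rintro ⟨i, j⟩ hij
    simp
  · rintro ⟨i, j⟩ hij
    simp only [Finset.mem_sigma, Finset.mem_range] at hij
    have : n - 1 - j - 1 - (i - 1 - j) = n - 1 - i := by omega
    simp [this]

/-! ### The `λ`-adic order -/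

/-- `f` has `λ`-adic order at least `d`; recall that `f n` is the coefficient of `λ^(n+1)`. -/
def OrdGE (d : ℕ) (f : Ser A) : Prop := ∀ n, n + 1 < d → f n = 0

lemma ordGE_one (f : Ser A) : OrdGE 1 f := fun n hn => by omega

lemma OrdGE.mono {d e : ℕ} {f : Ser A} (h : OrdGE e f) (hde : d ≤ e) : OrdGE d f :=
  fun n hn => h n (by omega)

lemma OrdGE.add {d : ℕ} {f g : Ser A} (hf : OrdGE d f) (hg : OrdGE d g) : OrdGE d (f + g) :=
  fun n hn => by simp [hf n hn, hg n hn]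

lemma OrdGE.sub {d : ℕ} {f g : Ser A} (hf : OrdGE d f) (hg : OrdGE d g) : OrdGE d (f - g) :=
  fun n hn => by simp [hf n hn, hg n hn]

lemma OrdGE.smul {d : ℕ} {f : Ser A} (c : k) (hf : OrdGE d f) : OrdGE d (c • f) :=
  fun n hn => by simp [hf n hn]

lemma OrdGE.cauchy {d e : ℕ} {f g : Ser A} (b : A →ₗ[k] A →ₗ[k] A)
    (hf : OrdGE d f) (hg : OrdGE e g) : OrdGE (d + e) (conv b f g) := by
  intro n hn
  refine Finset.sum_eq_zero fun i hi => ?_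
  have hi := Finset.mem_range.1 hi
  by_cases h : i + 1 < d
  · simp [hf i h]
  · simp [hg (n - 1 - i) (by omega)]

lemma eq_zero_of_ordGE {f : Ser A} (h : ∀ d, OrdGE d f) : f = 0 := by
  ext n; exact h (n + 2) n (by omega)

/-- `v ↦ u ≺ v` is a contraction, so `x = u + u ≺ x` has at most one solution. -/
lemma fix_unique (pr : A →ₗ[k] A →ₗ[k] A) {u x z : Ser A}
    (hx : x = u + conv pr u x) (hz : z = u + conv pr u z) : x = z := by
  have h : x - z = conv pr u (x - z) := by
    simp only [← convL_apply] at *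
    rw [map_sub]
    nth_rewrite 1 [hx, hz]
    abel
  have h0 : x - z = 0 := by
    refine eq_zero_of_ordGE fun d => ?_
    induction d with
    | zero => intro n hn; omega
    | succ d ih =>
      rw [h, add_comm]
      exact (ordGE_one u).cauchy pr ih
  exact sub_eq_zero.1 h0

/-! ### Formal infinite sums -/

/-- A family whose `m`-th member has order at least `m + 1`; such families are summable. -/
def Good (f : ℕ → Ser A) : Prop := ∀ m, OrdGE (m + 1) (f m)

/-- The `λ`-adic sum `Σ_m f m`, meaningful when `f` is `Good`. -/
def tsumS (f : ℕ → Ser A) : Ser A := fun n => ∑ m ∈ Finset.range (n + 1), f m n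

lemma tsumS_apply {f : ℕ → Ser A} (hf : Good f) {n M : ℕ} (h : n < M) :
    tsumS f n = ∑ m ∈ Finset.range M, f m n := by
  refine Finset.sum_subset (fun m hm => ?_) fun m _ hm => ?_
  · simp only [Finset.mem_range] at *; omega
  · simp only [Finset.mem_range] at hm
    exact hf m n (by omega)

lemma tsumS_add (f g : ℕ → Ser A) : tsumS (fun m => f m + g m) = tsumS f + tsumS g := by
  ext n; simp [tsumS, Finset.sum_add_distrib]

lemma tsumS_smul (c : k) (f : ℕ → Ser A) : tsumS (fun m => c • f m) = c • tsumS f := by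
  ext n; simp [tsumS, Finset.smul_sum]

lemma tsumS_succ {f : ℕ → Ser A} (hf : Good f) : tsumS f = f 0 + tsumS (fun m => f (m + 1)) := by
  ext n
  rw [tsumS_apply hf (show n < n + 1 + 1 by omega), Finset.sum_range_succ']
  simp [tsumS, add_comm]

lemma conv_tsumS_right (b : A →ₗ[k] A →ₗ[k] A) (v : Ser A) {f : ℕ → Ser A} (hf : Good f) :
    conv b v (tsumS f) = tsumS (fun m => conv b v (f m)) := by
  ext n
  simp only [conv]
  have : ∀ i ∈ Finset.range n, b (v i) (tsumS f (n - 1 - i)) =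
      ∑ m ∈ Finset.range (n + 1), b (v i) (f m (n - 1 - i)) := fun i _ => by
    rw [tsumS_apply hf (show n - 1 - i < n + 1 by omega), map_sum]
  rw [Finset.sum_congr rfl this, Finset.sum_comm]
  rfl

lemma conv_tsumS_left (b : A →ₗ[k] A →ₗ[k] A) (v : Ser A) {f : ℕ → Ser A} (hf : Good f) :
    conv b (tsumS f) v = tsumS (fun m => conv b (f m) v) := by
  simp only [← conv_flip b]
  exact conv_tsumS_right b.flip v hf

lemma tsumS_tsumS {F : ℕ → ℕ → Ser A} (hF : ∀ i l, OrdGE (i + l + 1) (F i l)) :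
    tsumS (fun i => tsumS (F i)) = tsumS (fun n => ∑ p ∈ antidiagonal n, F p.1 p.2) := by
  ext n
  simp only [tsumS, Finset.sum_apply]
  rw [Finset.sum_sigma', Finset.sum_sigma']
  symm
  refine Finset.sum_of_injOn (fun p => ⟨p.2.1, p.2.2⟩) ?_ ?_ ?_ ?_
  · rintro ⟨m, i, j⟩ h ⟨m', i', j'⟩ h' he
    simp only [Finset.coe_sigma, Set.mem_sigma_iff, Finset.mem_coe, Finset.mem_range,
      Finset.HasAntidiagonal.mem_antidiagonal] at h h'
    simp only [Sigma.mk.injEq, heq_eq_eq] at he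
    obtain ⟨rfl, rfl⟩ := he
    obtain ⟨_, rfl⟩ := h
    obtain ⟨_, rfl⟩ := h'
    rfl
  · rintro ⟨m, i, j⟩ h
    simp only [Finset.coe_sigma, Set.mem_sigma_iff, Finset.mem_coe, Finset.mem_range,
      Finset.HasAntidiagonal.mem_antidiagonal] at h ⊢
    omega
  · rintro ⟨i, j⟩ h h'
    refine hF i j n ?_
    by_contra hlt
    have hlt' : i + j < n + 1 := by omega
    exact h' ⟨⟨i + j, i, j⟩, Finset.mem_coe.2 (Finset.mem_sigma.2
      ⟨Finset.mem_range.2 hlt', Finset.HasAntidiagonal.mem_antidiagonal.2 rfl⟩), rfl⟩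
  · rintro ⟨m, i, j⟩ _
    rfl

/-- Existence for `x = u + u ≺ x`, by the Neumann series `u + u ≺ u + u ≺ (u ≺ u) + ⋯`. -/
lemma fix_exists (pr : A →ₗ[k] A →ₗ[k] A) (u : Ser A) : ∃ x, x = u + conv pr u x := by
  have hg : Good (fun m => (conv pr u)^[m] u) := by
    intro m
    induction m with
    | zero => exact ordGE_one u
    | succ m ih =>
      simp only [Function.iterate_succ_apply']
      rw [add_comm]
      exact (ordGE_one u).cauchy pr ih
  refine ⟨tsumS (fun m => (conv pr u)^[m] u), ?_⟩
  rw [conv_tsumS_right pr u hg]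
  nth_rewrite 1 [tsumS_succ hg]
  simp only [Function.iterate_succ_apply', Function.iterate_zero, id]

/-! ### Two commuting operators -/

/-- The expansion of `((x + d)^(n+1) - x^(n+1)) / d`, stated without division: the recursion
says that `q n = Σ_{i+j=n} x^i (x + d)^j`. -/
lemma quot_diff {B : Type*} [Ring B] {x d : B} (h : Commute x d) (q : ℕ → B) (h0 : q 0 = 1)
    (hq : ∀ n, q (n + 1) = x * q n + (x + d) ^ (n + 1)) (n : ℕ) :
    q n = ∑ p ∈ antidiagonal n, (n + 1).choose (p.2 + 1) • (x ^ p.1 * d ^ p.2) := by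
  induction n with
  | zero => simp [h0]
  | succ n ih =>
    have h1 : ∑ p ∈ antidiagonal (n + 1), (n + 1 + 1).choose (p.2 + 1) • (x ^ p.1 * d ^ p.2)
        = ∑ p ∈ antidiagonal (n + 1), (n + 1).choose p.1 • (x ^ p.1 * d ^ p.2)
        + ∑ p ∈ antidiagonal (n + 1), (n + 1).choose (p.2 + 1) • (x ^ p.1 * d ^ p.2) := by
      rw [← Finset.sum_add_distrib]
      refine Finset.sum_congr rfl fun p hp => ?_
      have hp := mem_antidiagonal.1 hp
      rw [Nat.choose_succ_succ, Nat.choose_symm_of_eq_add hp.symm, add_smul]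
    rw [h1, ← h.add_pow', hq, ih, Finset.Nat.sum_antidiagonal_succ]
    simp only [Nat.choose_succ_self, zero_smul, zero_add, pow_succ', Finset.mul_sum]
    rw [add_comm]
    congr 1
    refine Finset.sum_congr rfl fun p _ => ?_
    rw [mul_smul_comm, mul_assoc]

/-- The degree-`n` part of `(e^x - e^r)/(x - r) + e^x ψ(x - r) = e^r`, where
`ψ(z) = Σ_l ((-1)^l l/(l+1)!) z^l = e^{-z} - (1 - e^{-z})/z`, for commuting `x` and `r`. -/
lemma fer_degree {B : Type*} [Ring B] [Algebra k B] {x r : B} (h : Commute x r) (q : ℕ → B)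
    (h0 : q 0 = 1) (hq : ∀ n, q (n + 1) = x * q n + r ^ (n + 1)) (n : ℕ) :
    ((Nat.factorial (n + 1) : k))⁻¹ • q n + ∑ p ∈ antidiagonal n,
      (((Nat.factorial p.1 : k))⁻¹ * (((-1 : ℚ) ^ p.2 * p.2 / Nat.factorial (p.2 + 1) : ℚ) : k)) •
        (x ^ p.1 * (x - r) ^ p.2) = ((Nat.factorial n : k))⁻¹ • r ^ n := by
  have hd : Commute x (r - x) := h.sub_right (Commute.refl x)
  have e1 := quot_diff hd q h0 (by simpa using hq) n
  have e2 : r ^ n = ∑ p ∈ antidiagonal n, n.choose p.1 • (x ^ p.1 * (r - x) ^ p.2) := by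
    rw [← hd.add_pow']; simp
  rw [e1, e2, Finset.smul_sum, Finset.smul_sum, ← Finset.sum_add_distrib]
  refine Finset.sum_congr rfl ?_
  rintro ⟨i, l⟩ hp
  have hp : i + l = n := mem_antidiagonal.1 hp
  subst hp
  have hneg : (x - r) ^ l = ((-1 : k) ^ l) • (r - x) ^ l := by
    rw [← neg_sub r x, neg_pow, Algebra.smul_def, map_pow, map_neg, map_one]
  simp only
  rw [hneg, ← Nat.cast_smul_eq_nsmul k, ← Nat.cast_smul_eq_nsmul k, mul_smul_comm, smul_smul,
    smul_smul, smul_smul, ← add_smul]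
  congr 1
  have hi : (Nat.factorial i : k) ≠ 0 := Nat.cast_ne_zero.2 (Nat.factorial_ne_zero _)
  have hl : (Nat.factorial l : k) ≠ 0 := Nat.cast_ne_zero.2 (Nat.factorial_ne_zero _)
  have hl1 : ((l : k) + 1) ≠ 0 := by exact_mod_cast Nat.succ_ne_zero l
  have hil : (Nat.factorial (i + l) : k) ≠ 0 := Nat.cast_ne_zero.2 (Nat.factorial_ne_zero _)
  have hil1 : ((i : k) + l + 1) ≠ 0 := by exact_mod_cast Nat.succ_ne_zero (i + l)
  have c1 : (((i + l + 1).choose (l + 1) : ℕ) : k) =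
      Nat.factorial (i + l + 1) / (Nat.factorial (l + 1) * Nat.factorial i) := by
    have := Nat.cast_add_choose k (a := i) (b := l + 1)
    rw [← add_assoc] at this
    rw [mul_comm, ← this]
    congr 1
    exact Nat.choose_symm_of_eq_add (by omega)
  have c2 : (((i + l).choose i : ℕ) : k) =
      Nat.factorial (i + l) / (Nat.factorial i * Nat.factorial l) :=
    Nat.cast_add_choose k
  rw [c1, c2]
  have hs : ((-1 : k) ^ l) * (-1) ^ l = 1 := by rw [← mul_pow]; simp
  simp only [Nat.factorial_succ]
  push_cast
  field_simp
  linear_combination (l : k) * hs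

/-! ### One step of the Fer recursion -/

/-- `Σ_{l≥1} ((−1)^l l/(l+1)!) L_▷[u]^l u`, the step `U'_n ↦ U'_{n+1}`. -/
def ferStep (pr su : A →ₗ[k] A →ₗ[k] A) (u : Ser A) : Ser A :=
  fun m => ∑ l ∈ Finset.Icc 1 (m + 1),
      (((-1 : ℚ) ^ l * l / Nat.factorial (l + 1) : ℚ) : k) • ((lrhdOp pr su u)^[l] u) m

lemma ordGE_lrhdOp_iter (pr su : A →ₗ[k] A →ₗ[k] A) {u : Ser A} {d : ℕ} (hu : OrdGE d u) (l : ℕ) :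
    OrdGE ((l + 1) * d) ((lrhdOp pr su u)^[l] u) := by
  induction l with
  | zero => simpa using hu
  | succ l ih =>
    rw [Function.iterate_succ_apply', add_mul, one_mul]
    refine OrdGE.sub ?_ ?_
    · rw [add_comm]; exact hu.cauchy su ih
    · exact ih.cauchy pr hu

lemma ordGE_ferStep (pr su : A →ₗ[k] A →ₗ[k] A) {u : Ser A} {d : ℕ} (hu : OrdGE d u) :
    OrdGE (2 * d) (ferStep pr su u) := by
  intro n hn
  refine Finset.sum_eq_zero fun l hl => ?_
  have hl := (Finset.mem_Icc.1 hl).1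
  rw [ordGE_lrhdOp_iter pr su hu l n (hn.trans_le (Nat.mul_le_mul_right d (by omega))), smul_zero]

lemma ordGE_ferU (pr su : A →ₗ[k] A →ₗ[k] A) (a : A) (n : ℕ) :
    OrdGE (2 ^ n) (ferU pr su a n) := by
  induction n with
  | zero => exact ordGE_one _
  | succ n ih =>
    rw [pow_succ']
    exact ordGE_ferStep pr su ih

lemma good_lrhdOp (pr su : A →ₗ[k] A →ₗ[k] A) (u : Ser A) :
    Good (fun l => (lrhdOp pr su u)^[l] u) := fun l => by
  simpa using ordGE_lrhdOp_iter pr su (ordGE_one u) l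

lemma ferStep_eq (pr su : A →ₗ[k] A →ₗ[k] A) (u : Ser A) :
    ferStep pr su u = tsumS (fun l =>
      (((-1 : ℚ) ^ l * l / Nat.factorial (l + 1) : ℚ) : k) • (lrhdOp pr su u)^[l] u) := by
  ext n
  rw [tsumS_apply (fun l => (good_lrhdOp pr su u l).smul _) (show n < n + 2 by omega)]
  rw [Finset.range_eq_Ico, Finset.sum_eq_sum_Ico_succ_bot (by omega)]
  simp only [ferStep, pow_zero, Nat.cast_zero, mul_zero, zero_div, Rat.cast_zero, zero_smul,
    zero_add, Pi.smul_apply]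
  rfl

lemma good_powS (pr su : A →ₗ[k] A →ₗ[k] A) (u : Ser A) : Good (powS pr su u) := by
  intro m
  induction m with
  | zero => exact ordGE_one _
  | succ m ih =>
    rw [powS, Function.iterate_succ_apply', mulS_eq, add_comm]
    exact (ordGE_one u).cauchy _ ih

lemma powS_succ (pr su : A →ₗ[k] A →ₗ[k] A) (u : Ser A) (m : ℕ) :
    powS pr su u (m + 1) = conv (pr + su) u (powS pr su u m) := by
  rw [powS, Function.iterate_succ_apply', mulS_eq]
  rfl

lemma expS_eq (pr su : A →ₗ[k] A →ₗ[k] A) (u : Ser A) :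
    expS pr su u = tsumS (fun m => ((Nat.factorial (m + 1) : k))⁻¹ • powS pr su u m) := rfl

/-- Right action of powers: `v ≺ u^{*(m+1)} = (· ≺ u)^{m+1} v`. -/
lemma conv_pr_powS (pr su : A →ₗ[k] A →ₗ[k] A)
    (ax1 : ∀ a b c : A, pr (pr a b) c = pr a (pr b c + su b c)) (u : Ser A) (m : ℕ) (v : Ser A) :
    conv pr v (powS pr su u m) = ((convL pr).flip u ^ (m + 1)) v := by
  induction m generalizing v with
  | zero => simp [powS, convL_apply]
  | succ m ih =>
    rw [powS_succ, ← conv_assoc pr pr pr (pr + su) (by simpa using ax1), ih, pow_succ _ (m + 1)]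
    rfl

/-- Left action of powers: `u^{*(m+1)} ≻ v = (u ≻ ·)^{m+1} v`. -/
lemma conv_su_powS (pr su : A →ₗ[k] A →ₗ[k] A)
    (ax3 : ∀ a b c : A, su a (su b c) = su (pr a b + su a b) c) (u : Ser A) (m : ℕ) (v : Ser A) :
    conv su (powS pr su u m) v = (convL su u ^ (m + 1)) v := by
  induction m with
  | zero => simp [powS, convL_apply]
  | succ m ih =>
    rw [powS_succ, conv_assoc su (pr + su) su su (fun x y z => by simpa using (ax3 x y z).symm), ih,
      pow_succ' _ (m + 1)]
    rfl

lemma pow_su_tsumS (su : A →ₗ[k] A →ₗ[k] A) (u : Ser A) {f : ℕ → Ser A} (hf : Good f) (i : ℕ) :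
    (convL su u ^ i) (tsumS f) = tsumS (fun m => (convL su u ^ i) (f m)) := by
  induction i generalizing f with
  | zero => simp
  | succ i ih =>
    simp only [pow_succ, Module.End.mul_apply, convL_apply]
    rw [conv_tsumS_right su u hf]
    refine ih fun m => ?_
    exact ((ordGE_one u).cauchy su (hf m)).mono (by omega)

lemma ordGE_pow_su (su : A →ₗ[k] A →ₗ[k] A) (u : Ser A) {f : Ser A} {d : ℕ} (hf : OrdGE d f)
    (i : ℕ) : OrdGE (i + d) ((convL su u ^ i) f) := by
  induction i with
  | zero => simpa using hf
  | succ i ih =>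
    rw [pow_succ', Module.End.mul_apply, convL_apply]
    exact ((ordGE_one u).cauchy su ih).mono (by omega)

lemma lrhdOp_iter (pr su : A →ₗ[k] A →ₗ[k] A) (u v : Ser A) (l : ℕ) :
    (lrhdOp pr su u)^[l] v = ((convL su u - (convL pr).flip u) ^ l) v := by
  rw [Module.End.pow_apply]
  rfl

/-- `(exp*(u) − 𝟙) + exp*(u) ≻ u' = u ≺ exp*(u)`, where `u'` is the Fer step of `u`. -/
lemma exp_key (pr su : A →ₗ[k] A →ₗ[k] A)
    (ax1 : ∀ a b c : A, pr (pr a b) c = pr a (pr b c + su b c))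
    (ax2 : ∀ a b c : A, pr (su a b) c = su a (pr b c))
    (ax3 : ∀ a b c : A, su a (su b c) = su (pr a b + su a b) c) (u : Ser A) :
    expS pr su u + (ferStep pr su u + conv su (expS pr su u) (ferStep pr su u)) =
      u + conv pr u (expS pr su u) := by
  set x : Module.End k (Ser A) := convL su u with hx
  set r : Module.End k (Ser A) := (convL pr).flip u with hr
  have hcomm : Commute x r := by
    refine LinearMap.ext fun v => ?_
    exact (conv_assoc pr su su pr ax2 u v u).symm
  let q : ℕ → Module.End k (Ser A) := fun n => Nat.rec 1 (fun n y => x * y + r ^ (n + 1)) n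
  have hq : ∀ n, q (n + 1) = x * q n + r ^ (n + 1) := fun n => rfl
  have hpow : ∀ n, powS pr su u n = q n u := by
    intro n
    induction n with
    | zero => rfl
    | succ n ih =>
      rw [powS_succ, ← mulS_eq, mulS, conv_pr_powS pr su ax1, hq, LinearMap.add_apply,
        Module.End.mul_apply, ← ih, add_comm]
      rfl
  have hgood : Good (fun m => ((Nat.factorial (m + 1) : k))⁻¹ • powS pr su u m) :=
    fun m => (good_powS pr su u m).smul _
  set c : ℕ → k := fun l => (((-1 : ℚ) ^ l * l / Nat.factorial (l + 1) : ℚ) : k) with hc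
  have hlg : Good (fun l => c l • ((x - r) ^ l) u) := fun l => by
    have := (good_lrhdOp pr su u l).smul (c l)
    simpa only [lrhdOp_iter] using this
  have hstep : ferStep pr su u = tsumS (fun l => c l • ((x - r) ^ l) u) := by
    rw [ferStep_eq]
    simp only [lrhdOp_iter]
    rfl
  have hR : u + conv pr u (expS pr su u) =
      tsumS (fun n => ((Nat.factorial n : k))⁻¹ • (r ^ n) u) := by
    have hg : Good (fun n => ((Nat.factorial n : k))⁻¹ • (r ^ n) u) := by
      intro n
      refine OrdGE.smul _ ?_
      induction n with
      | zero => exact ordGE_one _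
      | succ n ih =>
        rw [pow_succ', Module.End.mul_apply]
        exact ih.cauchy pr (ordGE_one u)
    rw [tsumS_succ hg, expS_eq, conv_tsumS_right pr u hgood]
    simp only [← convL_apply, map_smul]
    simp only [convL_apply, conv_pr_powS pr su ax1]
    simp [hr]
  have hL : ferStep pr su u + conv su (expS pr su u) (ferStep pr su u) =
      tsumS (fun n => ∑ p ∈ antidiagonal n,
        (((Nat.factorial p.1 : k))⁻¹ * c p.2) • (x ^ p.1 * (x - r) ^ p.2) u) := by
    have hF : ∀ i l, OrdGE (i + l + 1)
        ((((Nat.factorial i : k))⁻¹ * c l) • (x ^ i * (x - r) ^ l) u) := by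
      intro i l
      have := ordGE_pow_su su u (hlg l) i
      rw [map_smul] at this
      rw [mul_smul, Module.End.mul_apply]
      exact this.smul _
    rw [← tsumS_tsumS hF]
    have hin : ∀ i, tsumS (fun l => (((Nat.factorial i : k))⁻¹ * c l) • (x ^ i * (x - r) ^ l) u) =
        ((Nat.factorial i : k))⁻¹ • (x ^ i) (ferStep pr su u) := by
      intro i
      rw [hstep, pow_su_tsumS su u hlg, ← tsumS_smul]
      simp only [map_smul, mul_smul, Module.End.mul_apply]
      rfl
    simp only [hin]
    have hg : Good (fun i => ((Nat.factorial i : k))⁻¹ • (x ^ i) (ferStep pr su u)) :=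
      fun i => (ordGE_pow_su su u (ordGE_one _) i).smul _
    rw [tsumS_succ hg, expS_eq, conv_tsumS_left su _ hgood]
    simp only [← convL_apply, map_smul, LinearMap.smul_apply]
    simp only [convL_apply, conv_su_powS pr su ax3]
    simp [hx]
  rw [hR, hL, expS_eq, ← tsumS_add]
  congr 1
  ext1 n
  have := congrArg (fun T : Module.End k (Ser A) => T u) (fer_degree (k := k) hcomm q rfl hq n)
  simp only [LinearMap.add_apply, LinearMap.smul_apply, LinearMap.sum_apply] at this
  rw [hpow]
  exact this

/-- If `Z' = 𝟙 + z'` solves `Z' = 𝟙 + u' ≺ Z'` then `exp*(u) * Z'` solves `Z = 𝟙 + u ≺ Z`. -/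
lemma fer_step (pr su : A →ₗ[k] A →ₗ[k] A)
    (ax1 : ∀ a b c : A, pr (pr a b) c = pr a (pr b c + su b c))
    (ax2 : ∀ a b c : A, pr (su a b) c = su a (pr b c))
    (ax3 : ∀ a b c : A, su a (su b c) = su (pr a b + su a b) c) (u z' : Ser A)
    (hz' : z' = ferStep pr su u + conv pr (ferStep pr su u) z') :
    expS pr su u + z' + mulS pr su (expS pr su u) z' =
      u + conv pr u (expS pr su u + z' + mulS pr su (expS pr su u) z') := by
  have key := exp_key pr su ax1 ax2 ax3 u
  set e := expS pr su u
  set w := ferStep pr su u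
  have h1 : conv su e z' = conv su e w + conv pr (conv su e w) z' := by
    rw [conv_assoc pr su su pr ax2]
    nth_rewrite 1 [hz']
    simp only [← convL_apply, map_add]
  have h2 : conv pr u (mulS pr su e z') = conv pr (conv pr u e) z' := by
    rw [mulS_eq, ← conv_assoc pr pr pr (pr + su) (by simpa using ax1)]
  have h3 := congrArg (fun t => conv pr t z') key
  simp only [← convL_apply, map_add, LinearMap.add_apply] at h1 h2 h3 key hz' ⊢
  rw [h2, mulS, ← convL_apply, ← convL_apply, h1]
  nth_rewrite 1 [hz']
  calc _ = (e + (w + convL su e w)) +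
        (convL pr e z' + (convL pr w z' + convL pr (convL su e w) z')) := by abel
    _ = _ := by rw [h3, key]; abel

lemma mulS_assoc (pr su : A →ₗ[k] A →ₗ[k] A)
    (ax1 : ∀ a b c : A, pr (pr a b) c = pr a (pr b c + su b c))
    (ax2 : ∀ a b c : A, pr (su a b) c = su a (pr b c))
    (ax3 : ∀ a b c : A, su a (su b c) = su (pr a b + su a b) c) (f g h : Ser A) :
    mulS pr su (mulS pr su f g) h = mulS pr su f (mulS pr su g h) := by
  simp only [mulS_eq]
  refine conv_assoc _ _ _ _ (fun x y z => ?_) f g h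
  have := ax1 x y z
  have h3 := ax3 x y z
  simp only [map_add, LinearMap.add_apply] at *
  rw [this, ax2, h3]
  abel

/-- The expansion of `X`, in any dendriform algebra. -/
lemma preLie_fer_X (pr su : A →ₗ[k] A →ₗ[k] A)
    (ax1 : ∀ a b c : A, pr (pr a b) c = pr a (pr b c + su b c))
    (ax2 : ∀ a b c : A, pr (su a b) c = su a (pr b c))
    (ax3 : ∀ a b c : A, su a (su b c) = su (pr a b + su a b) c)
    (a : A) (x : Ser A) (hx : x = lam a + conv pr (lam a) x) (n N : ℕ) (hn : n + 1 < 2 ^ N) :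
    x n = ferProdX pr su a N n := by
  have main : ∀ N, ∃ z, z = ferU pr su a N + conv pr (ferU pr su a N) z ∧
      x = ferProdX pr su a N + z + mulS pr su (ferProdX pr su a N) z := by
    intro N
    induction N with
    | zero =>
      refine ⟨x, hx, ?_⟩
      simp [ferProdX, mulS_eq, ← convL_apply]
    | succ N ih =>
      obtain ⟨z, hz, hxz⟩ := ih
      obtain ⟨z', hz'⟩ := fix_exists pr (ferU pr su a (N + 1))
      refine ⟨z', hz', ?_⟩
      have hzz := fix_unique pr hz (fer_step pr su ax1 ax2 ax3 (ferU pr su a N) z' hz')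
      rw [hxz, hzz, ferProdX]
      have := mulS_assoc pr su ax1 ax2 ax3 (ferProdX pr su a N) (expS pr su (ferU pr su a N)) z'
      simp only [mulS_eq, ← convL_apply, map_add, LinearMap.add_apply] at this ⊢
      rw [this]
      abel
  obtain ⟨z, hz, hxz⟩ := main N
  have hz0 : OrdGE (2 ^ N) z := by
    rw [hz]
    exact (ordGE_ferU pr su a N).add
      (((ordGE_ferU pr su a N).cauchy pr (ordGE_one z)).mono (by omega))
  have hm : OrdGE (2 ^ N) (mulS pr su (ferProdX pr su a N) z) := by
    rw [mulS_eq]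
    exact ((ordGE_one _).cauchy _ hz0).mono (by omega)
  rw [hxz, Pi.add_apply, Pi.add_apply, hz0 n hn, hm n hn, add_zero, add_zero]

/-! ### The opposite dendriform algebra -/

lemma mulS_op (pr su : A →ₗ[k] A →ₗ[k] A) (f g : Ser A) :
    mulS su.flip pr.flip f g = mulS pr su g f := by
  simp only [mulS, conv_flip, add_comm]

lemma powS_op (pr su : A →ₗ[k] A →ₗ[k] A)
    (ax1 : ∀ a b c : A, pr (pr a b) c = pr a (pr b c + su b c))
    (ax2 : ∀ a b c : A, pr (su a b) c = su a (pr b c))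
    (ax3 : ∀ a b c : A, su a (su b c) = su (pr a b + su a b) c) (f : Ser A) (m : ℕ) :
    powS su.flip pr.flip f m = powS pr su f m := by
  have hcomm : ∀ m, mulS pr su (powS pr su f m) f = mulS pr su f (powS pr su f m) := by
    intro m
    induction m with
    | zero => rfl
    | succ m ih => rw [powS_succ, ← mulS_eq, mulS_assoc pr su ax1 ax2 ax3, ih]
  induction m with
  | zero => rfl
  | succ m ih => rw [powS_succ, powS_succ, ← mulS_eq, ← mulS_eq, mulS_op, ih, hcomm]

lemma expS_op (pr su : A →ₗ[k] A →ₗ[k] A)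
    (ax1 : ∀ a b c : A, pr (pr a b) c = pr a (pr b c + su b c))
    (ax2 : ∀ a b c : A, pr (su a b) c = su a (pr b c))
    (ax3 : ∀ a b c : A, su a (su b c) = su (pr a b + su a b) c) (f : Ser A) :
    expS su.flip pr.flip f = expS pr su f := by
  simp only [expS_eq, powS_op pr su ax1 ax2 ax3]

/-- The left pre-Lie product of the opposite algebra is `w ▷' v = v ≺ w − w ≻ v`, the negative of
`▷`; hence `L_▷'[−w] = L_▷[w]`. -/
lemma lrhdOp_op (pr su : A →ₗ[k] A →ₗ[k] A) (w : Ser A) :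
    lrhdOp su.flip pr.flip (-w) = lrhdOp pr su w := by
  ext1 v
  simp only [lrhdOp, ← convL_apply, map_neg, LinearMap.neg_apply]
  simp only [convL_apply, conv_flip]
  abel

lemma lrhdOp_iter_neg (pr su : A →ₗ[k] A →ₗ[k] A) (w v : Ser A) (l : ℕ) :
    (lrhdOp pr su w)^[l] (-v) = -(lrhdOp pr su w)^[l] v := by
  rw [lrhdOp_iter, lrhdOp_iter, map_neg]

lemma lam_neg (a : A) : lam (-a) = -lam a := by
  ext n
  by_cases h : n = 0 <;> simp [lam, h]

lemma ferU_op (pr su : A →ₗ[k] A →ₗ[k] A) (a : A) (n : ℕ) :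
    ferU su.flip pr.flip (-a) n = -ferU pr su a n := by
  induction n with
  | zero => exact lam_neg a
  | succ n ih =>
    ext m
    simp only [ferU, ih, lrhdOp_op, lrhdOp_iter_neg, Pi.neg_apply, smul_neg, Finset.sum_neg_distrib]

lemma ferProdX_op (pr su : A →ₗ[k] A →ₗ[k] A)
    (ax1 : ∀ a b c : A, pr (pr a b) c = pr a (pr b c + su b c))
    (ax2 : ∀ a b c : A, pr (su a b) c = su a (pr b c))
    (ax3 : ∀ a b c : A, su a (su b c) = su (pr a b + su a b) c) (a : A) (N : ℕ) :
    ferProdX su.flip pr.flip (-a) N = ferProdY pr su a N := by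
  induction N with
  | zero => rfl
  | succ N ih =>
    rw [ferProdX, ferProdY, ih, ferU_op, mulS_op, expS_op pr su ax1 ax2 ax3,
      add_comm (ferProdY pr su a N)]

/-- **Pre-Lie Fer expansion.**  The solutions `X = 𝟙 + x` and `Y = 𝟙 + y` of
`X = 𝟙 + λa ≺ X` and `Y = 𝟙 − Y ≻ λa` are the `λ`-adic limits of the ordered
products `exp*(U'_0) * exp*(U'_1) * ⋯` and `⋯ * exp*(−U'_1) * exp*(−U'_0)`:
every coefficient agrees with that of a sufficiently long partial product
(`U'_n` has order at least `2^n`). -/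
theorem preLie_fer {k A : Type*} [Field k] [CharZero k]
    [AddCommGroup A] [Module k A]
    (pr su : A →ₗ[k] A →ₗ[k] A)
    (ax1 : ∀ a b c : A, pr (pr a b) c = pr a (pr b c + su b c))
    (ax2 : ∀ a b c : A, pr (su a b) c = su a (pr b c))
    (ax3 : ∀ a b c : A, su a (su b c) = su (pr a b + su a b) c)
    (a : A) (x y : Ser A)
    (hx : x = lam a + conv pr (lam a) x)
    (hy : y = -lam a - conv su y (lam a)) :
    (∀ n N : ℕ, n + 1 < 2 ^ N → x n = ferProdX pr su a N n) ∧
    (∀ n N : ℕ, n + 1 < 2 ^ N → y n = ferProdY pr su a N n) := by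
  refine ⟨fun n N hn => preLie_fer_X pr su ax1 ax2 ax3 a x hx n N hn, fun n N hn => ?_⟩
  rw [← ferProdX_op pr su ax1 ax2 ax3]
  refine preLie_fer_X su.flip pr.flip ?_ ?_ ?_ (-a) y ?_ n N hn
  · intro a b c
    simpa [add_comm] using ax3 c b a
  · intro a b c
    simpa using (ax2 c b a).symm
  · intro a b c
    simpa [add_comm] using ax1 c b a
  · rw [lam_neg, conv_flip]
    simp only [← convL_apply, map_neg] at hy ⊢
    rw [← sub_eq_add_neg]
    exact hy

end DendSeries
end

section
/- Let (A, ·) be an associative algebra over k and R : A → A a Rota–Baxter operator of weight θ. Then the three bilinear operations a < b := aR(b), a > b := R(a)b, a • b := θab make A a tridendriform algebra, i.e. they satisfy the seven axioms: (x < y) < z = x < (y ⋆ z), (x > y) < z = x > (y < z), (x ⋆ y) > z = x > (y > z), (x > y) • z = x > (y • z), (x < y) • z = x • (y > z), (x • y) < z = x • (y < z), (x • y) • z = x • (y • z), where x ⋆ y := x < y + x > y + x • y. -/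
/-- Let `A` be an associative algebra over a field `k` of characteristic zero and
`R : A → A` a Rota–Baxter operator of weight `θ`.  Then the operations
`a < b := a R(b)`, `a > b := R(a) b`, `a • b := θ a b` make `A` a tridendriform
algebra, i.e. they satisfy the seven tridendriform axioms, where
`x ⋆ y := x < y + x > y + x • y`. -/
theorem rotaBaxter_tridendriform {k A : Type*} [Field k] [CharZero k]
    [NonUnitalRing A] [Module k A] [SMulCommClass k A A] [IsScalarTower k A A]
    (θ : k) (R : A →ₗ[k] A)
    (hR : ∀ a b : A, R a * R b = R (R a * b + a * R b + θ • (a * b))) :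
    ∀ x y z : A,
      ((x * R y) * R z = x * R (y * R z + R y * z + θ • (y * z))) ∧
      ((R x * y) * R z = R x * (y * R z)) ∧
      (R (x * R y + R x * y + θ • (x * y)) * z = R x * (R y * z)) ∧
      (θ • ((R x * y) * z) = R x * (θ • (y * z))) ∧
      (θ • ((x * R y) * z) = θ • (x * (R y * z))) ∧
      ((θ • (x * y)) * R z = θ • (x * (y * R z))) ∧
      (θ • ((θ • (x * y)) * z) = θ • (x * (θ • (y * z)))) := by
  intro x y z
  -- The Rota–Baxter identity, with its first two summands exchanged to match the order in `⋆`.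
  have hR' : ∀ a b : A, R (a * R b + R a * b + θ • (a * b)) = R a * R b := fun a b => by
    rw [hR, add_comm (a * R b)]
  refine ⟨?_, ?_, ?_, ?_, ?_, ?_, ?_⟩ <;>
    simp only [hR', mul_assoc, smul_mul_assoc, mul_smul_comm]
end

section
/- Let A be an associative Rota–Baxter algebra of weight θ with Rota–Baxter operator R. Then the operation a ▷ b := R(a)b − bR(a) − θba is left pre-Lie: (a ▷ b) ▷ c − a ▷ (b ▷ c) = (b ▷ a) ▷ c − b ▷ (a ▷ c) for all a, b, c ∈ A. -/
/-! Write `a ▷ c = R a * c - c * S a` with `S a = R a + θ • a`. The pre-Lie identity says that the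
commutator of the operators `a ▷ ·` and `b ▷ ·` is `(a ▷ b - b ▷ a) ▷ ·`. That commutator is
`c ↦ [R a, R b] * c - c * [S a, S b]`. On the other hand `a ▷ b - b ▷ a` is the commutator of `a` and
`b` for the product `R a * b + a * R b + θ • (a * b)`, which the Rota–Baxter identity says `R` sends
to the original product (`map_rbPreLie_commutator`); hence `S` does as well, and the two sides
agree. -/

/-- The left pre-Lie product `a ▷ b := R(a) b − b R(a) − θ b a` associated with a
linear operator `R` and a weight `θ`. -/
def rbPreLie {k A : Type*} [Field k] [NonUnitalRing A] [Module k A]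
    (θ : k) (R : A →ₗ[k] A) (x y : A) : A :=
  R x * y - y * R x - θ • (y * x)

theorem rbPreLie_sub_rbPreLie {k A : Type*} [Field k] [NonUnitalRing A] [Module k A]
    [SMulCommClass k A A] [IsScalarTower k A A] (θ : k) (R : A →ₗ[k] A) (a b c : A) :
    rbPreLie θ R a c - rbPreLie θ R b c = rbPreLie θ R (a - b) c := by
  simp only [rbPreLie, map_sub, sub_mul, mul_sub, smul_sub]
  abel

/-- `R` intertwines the commutator of `▷` with the commutator of the associative product. -/
theorem map_rbPreLie_commutator {k A : Type*} [Field k] [NonUnitalRing A] [Module k A]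
    (θ : k) (R : A →ₗ[k] A)
    (hR : ∀ a b : A, R a * R b = R (R a * b + a * R b + θ • (a * b))) (a b : A) :
    R (rbPreLie θ R a b - rbPreLie θ R b a) = R a * R b - R b * R a := by
  rw [hR a b, hR b a, ← map_sub]
  congr 1
  simp only [rbPreLie]
  abel

/-- Let `A` be an associative Rota–Baxter algebra of weight `θ` with Rota–Baxter
operator `R`.  Then `a ▷ b := R(a) b − b R(a) − θ b a` is left pre-Lie:
`(a ▷ b) ▷ c − a ▷ (b ▷ c) = (b ▷ a) ▷ c − b ▷ (a ▷ c)`. -/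
theorem rotaBaxter_preLie {k A : Type*} [Field k] [CharZero k]
    [NonUnitalRing A] [Module k A] [SMulCommClass k A A] [IsScalarTower k A A]
    (θ : k) (R : A →ₗ[k] A)
    (hR : ∀ a b : A, R a * R b = R (R a * b + a * R b + θ • (a * b))) :
    ∀ a b c : A,
      rbPreLie θ R (rbPreLie θ R a b) c - rbPreLie θ R a (rbPreLie θ R b c)
        = rbPreLie θ R (rbPreLie θ R b a) c - rbPreLie θ R b (rbPreLie θ R a c) := by
  intro a b c
  rw [sub_eq_sub_iff_sub_eq_sub, rbPreLie_sub_rbPreLie]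
  -- Only the outermost product is unfolded first, so that `R` still meets `a ▷ b - b ▷ a` intact.
  rw [rbPreLie, map_rbPreLie_commutator θ R hR]
  simp only [rbPreLie, smul_sub, mul_sub, sub_mul, mul_smul_comm, smul_mul_assoc, mul_assoc]
  module
end

section
/- Let (A, ≺, ≻) be a dendriform algebra augmented by a unit 𝟙 (with a ≺ 𝟙 := a =: 𝟙 ≻ a, 𝟙 ≺ a := 0 =: a ≻ 𝟙), and let ω ∈ A. Then for every n ≥ 0, Σ_{p+q=n, p,q≥0} ω^{*p} ≻ ω ≺ ω^{*q} = ω^{*(n+1)}, where powers are taken with respect to the associative product a*b := a ≺ b + a ≻ b, the summand with p = 0 is read as ω ≺ ω^{*q}, the summand with q = 0 as ω^{*p} ≻ ω, and the n = 0 sum is ω. (Note that the summands are unambiguous since (x ≻ y) ≺ z = x ≻ (y ≺ z).) -/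
/-!
The proof is by induction on `n`, multiplying by `ω` on the left: `ω^{*(n+2)}` is
`ω ≺ ω^{*(n+1)} + ω ≻ ω^{*(n+1)}`. The first part is the `p = 0` summand of the next sum.
For the second part, expand `ω^{*(n+1)}` by the induction hypothesis; since `ω ≻ ·` raises the
left exponent of each summand by one (`succ_dendTerm`, a consequence of
`a ≻ (b ≻ c) = (a * b) ≻ c`), this yields exactly the summands with `p ≥ 1`.
-/

open Finset

/-- Powers with respect to the associative product `a * b := a ≺ b + a ≻ b` of a
dendriform algebra: `dendPow prec succ ω m = ω^{*(m+1)}`. -/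
def dendPow {k A : Type*} [Field k] [AddCommGroup A] [Module k A]
    (prec succ : A →ₗ[k] A →ₗ[k] A) (w : A) (m : ℕ) : A :=
  (fun v => prec w v + succ w v)^[m] w

/-- The summand `ω^{*p} ≻ ω ≺ ω^{*q}` read with the conventions of the unital
augmentation: the `p = 0` summand is `ω ≺ ω^{*q}`, the `q = 0` summand is
`ω^{*p} ≻ ω`, and the `p = q = 0` summand is `ω`. -/
def dendTerm {k A : Type*} [Field k] [AddCommGroup A] [Module k A]
    (prec succ : A →ₗ[k] A →ₗ[k] A) (w : A) : ℕ → ℕ → A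
  | 0, 0 => w
  | 0, q + 1 => prec w (dendPow prec succ w q)
  | p + 1, 0 => succ (dendPow prec succ w p) w
  | p + 1, q + 1 => succ (dendPow prec succ w p) (prec w (dendPow prec succ w q))

theorem dendPow_succ {k A : Type*} [Field k] [AddCommGroup A] [Module k A]
    (prec succ : A →ₗ[k] A →ₗ[k] A) (w : A) (m : ℕ) :
    dendPow prec succ w (m + 1)
      = prec w (dendPow prec succ w m) + succ w (dendPow prec succ w m) := by
  simp only [dendPow, Function.iterate_succ_apply']

/-- `ω ≻ (ω^{*p} ≻ ω ≺ ω^{*q}) = ω^{*(p+1)} ≻ ω ≺ ω^{*q}`, including the boundary cases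
where `p` or `q` vanishes. -/
theorem succ_dendTerm {k A : Type*} [Field k] [AddCommGroup A] [Module k A]
    (prec succ : A →ₗ[k] A →ₗ[k] A)
    (ax3 : ∀ a b c : A, succ a (succ b c) = succ (prec a b + succ a b) c)
    (w : A) (p q : ℕ) :
    succ w (dendTerm prec succ w p q) = dendTerm prec succ w (p + 1) q := by
  rcases p with _ | p <;> rcases q with _ | q
  · rfl
  · rfl
  · simp only [dendTerm, dendPow_succ, ax3]
  · simp only [dendTerm, dendPow_succ, ax3]

/-- In a dendriform algebra augmented by a unit `𝟙`, for every `ω ∈ A` and every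
`n ≥ 0` one has `Σ_{p+q=n} ω^{*p} ≻ ω ≺ ω^{*q} = ω^{*(n+1)}`. -/
theorem dendriform_power_sum {k A : Type*} [Field k] [CharZero k]
    [AddCommGroup A] [Module k A]
    (prec succ : A →ₗ[k] A →ₗ[k] A)
    (ax1 : ∀ a b c : A, prec (prec a b) c = prec a (prec b c + succ b c))
    (ax2 : ∀ a b c : A, prec (succ a b) c = succ a (prec b c))
    (ax3 : ∀ a b c : A, succ a (succ b c) = succ (prec a b + succ a b) c)
    (w : A) :
    ∀ n : ℕ, ∑ p ∈ Finset.range (n + 1), dendTerm prec succ w p (n - p)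
      = dendPow prec succ w n := by
  intro n
  induction n with
  | zero => simp [dendTerm, dendPow]
  | succ n ih =>
    rw [Finset.sum_range_succ', dendPow_succ, add_comm]
    congr 1
    rw [← ih, map_sum]
    refine Finset.sum_congr rfl fun p _ => ?_
    rw [succ_dendTerm prec succ ax3, Nat.add_sub_add_right]
end
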